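/- arXiv:1409.3159 — 2 statements merged into one kernel-verified Lean document; each statement's English description precedes it below -/
import Mathlib

section
/- Let G be a connected graph of order n with σ_2 ≥ n − 2. Then G has a dominating path, i.e., a path P such that V(G) − V(P) is an independent set. (Corollary 15) -/
/-!
In a connected graph, a longest path that omits some vertex has no cycle on its vertex set: opening
such a cycle at a vertex with a neighbour off the cycle would give a longer path. Hence its ends `u`
and `v` are not adjacent, and a neighbour of `v` is never the predecessor along the path of a
neighbour of `u`, since the Pósa rotation would give another longest path on the same vertices with
adjacent ends. Counting positions along the path bounds `deg u + deg v` by its length, so a longest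
path has at least `min n (σ₂ + 1)` vertices. If `n ≤ σ₂ + 2`, it omits at most one vertex.
-/

open SimpleGraph

variable {V : Type*}

/-- A set of vertices is independent in `G`. -/
def IsIndSet (G : SimpleGraph V) (s : Set V) : Prop :=
  ∀ ⦃u⦄, u ∈ s → ∀ ⦃v⦄, v ∈ s → ¬ G.Adj u v

/-- The number of end-vertices (vertices of degree one) of a subgraph `H`. -/
noncomputable def endVertexCount {G : SimpleGraph V} (H : G.Subgraph) : ℕ :=
  {v : V | v ∈ H.verts ∧ (H.neighborSet v).ncard = 1}.ncard

/-- `H` is a cycle; a single vertex and a single edge are regarded as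
simple cycles of orders 1 and 2, respectively. -/
def IsCycleSubgraph {G : SimpleGraph V} (H : G.Subgraph) : Prop :=
  H.Connected ∧ (H.verts.ncard ≤ 2 ∨ ∀ v ∈ H.verts, (H.neighborSet v).ncard = 2)

/-- `H` is a `k`-ended tree in `G`: a tree with at most `k` end-vertices (leaves);
a cycle is regarded as a 1-ended tree. -/
def IsKEndedTree (G : SimpleGraph V) (k : ℕ) (H : G.Subgraph) : Prop :=
  (H.coe.IsTree ∧ endVertexCount H ≤ k) ∨ (1 ≤ k ∧ IsCycleSubgraph H)

/-- `t k`: the order of a largest `k`-ended tree in `G`. -/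
noncomputable def maxKEndedOrder (G : SimpleGraph V) (k : ℕ) : ℕ :=
  sSup {n | ∃ H : G.Subgraph, IsKEndedTree G k H ∧ H.verts.ncard = n}

/-- `σ m`: the minimum degree sum over independent sets of `m` vertices of `G`,
and `+∞` if the independence number of `G` is less than `m`. -/
noncomputable def minDegreeSum (G : SimpleGraph V) [Fintype V] [DecidableRel G.Adj]
    (m : ℕ) : ℕ∞ :=
  ⨅ s ∈ {s : Finset V | s.card = m ∧ IsIndSet G ↑s}, (∑ v ∈ s, G.degree v : ℕ∞)

theorem le_add_of_min_le {α : Type*} [Add α] [LinearOrder α] [CanonicallyOrderedAdd α]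
    [AddRightMono α] {a b c d : α} (h : a ≤ b + d) (hmin : min a b ≤ c) : a ≤ c + d :=
  (min_le_iff.1 hmin).elim (·.trans le_self_add) (fun hb ↦ h.trans (add_le_add_left hb d))

section

variable {G : SimpleGraph V} {u v : V}

theorem exists_isPath_length_eq_of_isCycle (hG : G.Preconnected) {c : G.Walk u u}
    (hc : c.IsCycle) {z : V} (hz : z ∉ c.support) :
    ∃ (x y : V) (q : G.Walk x y), q.IsPath ∧ q.length = c.length := by
  classical
  obtain ⟨r⟩ := hG u z
  obtain ⟨d, -, hfst, hsnd⟩ := r.exists_boundary_dart {x | x ∈ c.support} c.start_mem_support hz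
  let c' := c.rotate d.fst hfst
  have hc' : c'.IsCycle := (Walk.isCycle_rotate hfst).2 hc
  have hsnd' : d.snd ∉ c'.tail.support := fun h ↦
    hsnd ((c.mem_support_rotate_iff d.fst hfst).1 (c'.cons_support_tail hc'.not_nil ▸ .tail _ h))
  refine ⟨_, _, c'.tail.concat d.adj, hc'.isPath_tail.concat hsnd' d.adj, ?_⟩
  rw [Walk.length_concat, Walk.length_tail_add_one hc'.not_nil, Walk.length_rotate]

/-- The Pósa rotation of `p = u … pᵢ pᵢ₊₁ … v` along an edge `pᵢ v`: the walk
`u … pᵢ v … pᵢ₊₁`, which visits the vertices of `p` in another order. It is used to turn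
crossing neighbours of the ends of `p` into adjacent ends. The vertex `pᵢ` is `p.getVert i`. -/
def posaRotation (p : G.Walk u v) (i : ℕ) (h : G.Adj (p.getVert i) v) :
    G.Walk u (p.getVert (i + 1)) :=
  (p.take i).append (.cons h (p.drop (i + 1)).reverse)

theorem support_posaRotation_perm (p : G.Walk u v) {i : ℕ} (h : G.Adj (p.getVert i) v) :
    (posaRotation p i h).support.Perm p.support := by
  have hi : i < p.length := by
    by_contra! hle
    exact h.ne (p.getVert_of_length_le hle)
  have hsupp : (posaRotation p i h).support =
      p.support.take (i + 1) ++ (p.support.drop (i + 1)).reverse := by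
    simp only [posaRotation, Walk.support_append, Walk.support_cons, List.tail_cons,
      Walk.support_reverse, Walk.support_take, Walk.drop_support_eq_support_drop_min,
      min_eq_left (Nat.succ_le_of_lt hi)]
  rw [hsupp]
  exact ((List.reverse_perm _).append_left _).trans (.of_eq (List.take_append_drop _ _))

theorem degree_le_card_filter {ι : Type*} {x : V} [Fintype (G.neighborSet x)]
    [DecidablePred (G.Adj x)] (f : ι → V) (s : Finset ι)
    (hf : ∀ w, G.Adj x w → ∃ i ∈ s, f i = w) :
    G.degree x ≤ Finset.card {i ∈ s | G.Adj x (f i)} := by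
  rw [← G.card_neighborFinset_eq_degree]
  refine Finset.card_le_card_of_surjOn f fun w hw ↦ ?_
  have hadj : G.Adj x w := by simpa using hw
  obtain ⟨i, hi, rfl⟩ := hf w hadj
  exact ⟨i, by simp [hi, hadj], rfl⟩

/-- A path of maximum length among all paths of the graph, whatever their ends. It
serves as the dominating path. -/
def IsLongestPath (p : G.Walk u v) : Prop :=
  p.IsPath ∧ ∀ ⦃x y : V⦄ (q : G.Walk x y), q.IsPath → q.length ≤ p.length

namespace IsLongestPath

variable {p : G.Walk u v}

theorem reverse (hp : IsLongestPath p) : IsLongestPath p.reverse :=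
  ⟨hp.1.reverse, fun _ _ q hq ↦ (hp.2 q hq).trans_eq p.length_reverse.symm⟩

theorem of_support_perm (hp : IsLongestPath p) {x y : V} {q : G.Walk x y}
    (hq : q.support.Perm p.support) : IsLongestPath q := by
  have hlen : q.length = p.length := by simpa using hq.length_eq
  exact ⟨.mk' (hq.nodup_iff.2 hp.1.support_nodup), fun _ _ r hr ↦ (hp.2 r hr).trans_eq hlen.symm⟩

theorem mem_support_of_adj_end (hp : IsLongestPath p) {w : V} (hw : G.Adj v w) :
    w ∈ p.support := by
  by_contra hmem
  simpa using hp.2 _ (hp.1.concat hmem hw)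

theorem mem_support_of_adj_start (hp : IsLongestPath p) {w : V} (hw : G.Adj u w) :
    w ∈ p.support := by
  simpa using hp.reverse.mem_support_of_adj_end hw

theorem two_le_length (hp : IsLongestPath p) (hG : G.Preconnected) {z : V}
    (hz : z ∉ p.support) : 2 ≤ p.length := by
  obtain ⟨r⟩ := hG u z
  obtain ⟨d, -, hfst, hsnd⟩ := r.exists_boundary_dart {x | x ∈ p.support} p.start_mem_support hz
  obtain ⟨i, hi, hle⟩ := Walk.mem_support_iff_exists_getVert.1 hfst
  have hne_zero : i ≠ 0 := by
    rintro rfl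
    exact hsnd (hp.mem_support_of_adj_start ((p.getVert_zero.symm.trans hi) ▸ d.adj))
  have hne_length : i ≠ p.length := by
    rintro rfl
    exact hsnd (hp.mem_support_of_adj_end ((p.getVert_length.symm.trans hi) ▸ d.adj))
  lia

theorem start_ne_end (hp : IsLongestPath p) (hG : G.Preconnected) {z : V}
    (hz : z ∉ p.support) : u ≠ v := by
  rintro rfl
  have hlen := hp.two_le_length hG hz
  rw [Walk.length_eq_zero_iff.2 (Walk.isPath_iff_nil.1 hp.1)] at hlen
  lia

theorem not_adj (hp : IsLongestPath p) (hG : G.Preconnected) {z : V} (hz : z ∉ p.support) :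
    ¬ G.Adj u v := by
  intro huv
  have hcycle : (Walk.cons huv.symm p).IsCycle := by
    refine Walk.isCycle_iff_isPath_tail_and_le_length.2 ⟨by simpa using hp.1, ?_⟩
    simpa using hp.two_le_length hG hz
  have hz' : z ∉ (Walk.cons huv.symm p).support := by
    rw [Walk.support_cons, List.mem_cons, not_or]
    exact ⟨fun h ↦ hz (h ▸ p.end_mem_support), hz⟩
  obtain ⟨x, y, q, hq, hlen⟩ := exists_isPath_length_eq_of_isCycle hG hcycle hz'
  have hle := hp.2 q hq
  rw [hlen, Walk.length_cons] at hle
  lia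

theorem not_adj_getVert_of_adj_getVert_succ (hp : IsLongestPath p) (hG : G.Preconnected) {z : V}
    (hz : z ∉ p.support) {i : ℕ} (hu : G.Adj u (p.getVert (i + 1))) :
    ¬ G.Adj v (p.getVert i) := by
  intro hv
  have hperm := support_posaRotation_perm p hv.symm
  exact (hp.of_support_perm hperm).not_adj hG (fun h ↦ hz (hperm.mem_iff.1 h)) hu

theorem degree_add_degree_le_length [Fintype (G.neighborSet u)] [Fintype (G.neighborSet v)]
    (hp : IsLongestPath p) (hG : G.Preconnected) {z : V} (hz : z ∉ p.support) :
    G.degree u + G.degree v ≤ p.length := by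
  classical
  let S := {i ∈ Finset.range p.length | G.Adj u (p.getVert (i + 1))}
  let T := {i ∈ Finset.range p.length | G.Adj v (p.getVert i)}
  have hS : G.degree u ≤ S.card := by
    refine degree_le_card_filter _ _ fun w hw ↦ ?_
    obtain ⟨i, rfl, hi⟩ := Walk.mem_support_iff_exists_getVert.1 (hp.mem_support_of_adj_start hw)
    have hne_zero : i ≠ 0 := fun h ↦ hw.ne (by rw [h, Walk.getVert_zero])
    exact ⟨i - 1, Finset.mem_range.2 (by lia), by rw [Nat.sub_add_cancel (by lia)]⟩
  have hT : G.degree v ≤ T.card := by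
    refine degree_le_card_filter _ _ fun w hw ↦ ?_
    obtain ⟨i, rfl, hi⟩ := Walk.mem_support_iff_exists_getVert.1 (hp.mem_support_of_adj_end hw)
    have hne_length : i ≠ p.length := fun h ↦ hw.ne (by rw [h, Walk.getVert_length])
    exact ⟨i, Finset.mem_range.2 (by lia), rfl⟩
  have hdisj : Disjoint S T := Finset.disjoint_filter.2 fun _ _ ↦
    hp.not_adj_getVert_of_adj_getVert_succ hG hz
  have hsub : S ∪ T ⊆ Finset.range p.length :=
    Finset.union_subset (Finset.filter_subset _ _) (Finset.filter_subset _ _)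
  calc G.degree u + G.degree v
    _ ≤ S.card + T.card := add_le_add hS hT
    _ = (S ∪ T).card := (Finset.card_union_of_disjoint hdisj).symm
    _ ≤ (Finset.range p.length).card := Finset.card_le_card hsub
    _ = p.length := Finset.card_range _

end IsLongestPath

theorem exists_isLongestPath [Nonempty V] [Finite G.edgeSet] :
    ∃ (u v : V) (p : G.Walk u v), IsLongestPath p := by
  obtain ⟨u, v, p, hp, hmax⟩ := Walk.exists_isPath_forall_isPath_length_le_length G
  exact ⟨u, v, p, hp, hmax⟩

theorem minDegreeSum_two_le [Fintype V] [DecidableRel G.Adj] (hne : u ≠ v) (hadj : ¬ G.Adj u v) :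
    minDegreeSum G 2 ≤ (G.degree u + G.degree v : ℕ) := by
  classical
  have hind : IsIndSet G ({u, v} : Finset V) := by
    simp [IsIndSet, hadj, G.adj_comm v u]
  calc minDegreeSum G 2
    _ ≤ ∑ x ∈ {u, v}, (G.degree x : ℕ∞) := iInf₂_le _ ⟨Finset.card_pair hne, hind⟩
    _ = (G.degree u + G.degree v : ℕ) := by rw [Finset.sum_pair hne, Nat.cast_add]

theorem isIndSet_compl_support_of_card_le [Fintype V] {p : G.Walk u v} (hp : p.IsPath)
    (h : Fintype.card V ≤ p.support.length + 1) : IsIndSet G {x | x ∉ p.support} := by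
  intro x hx y hy hxy
  have hnodup : (x :: y :: p.support).Nodup := by
    simpa [hxy.ne, hp.support_nodup] using And.intro hx hy
  have hle := hnodup.length_le_card
  simp only [List.length_cons] at hle
  lia

end

theorem corollary15_general [Fintype V] (G : SimpleGraph V) [DecidableRel G.Adj]
    (hG : G.Connected) :
    ∃ (u v : V) (p : G.Walk u v), p.IsPath ∧
      min (Fintype.card V : ℕ∞) (minDegreeSum G 2 + 1) ≤ p.support.length := by
  classical
  have := hG.nonempty
  obtain ⟨u, v, p, hp⟩ := exists_isLongestPath (G := G)
  refine ⟨u, v, p, hp.1, ?_⟩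
  by_cases hspan : ∀ z, z ∈ p.support
  · rw [(hp.1.isHamiltonian_of_mem hspan).length_support]
    exact min_le_left _ _
  · obtain ⟨z, hz⟩ := not_forall.1 hspan
    have hne : u ≠ v := hp.start_ne_end hG.preconnected hz
    have hadj : ¬ G.Adj u v := hp.not_adj hG.preconnected hz
    have hσ : minDegreeSum G 2 ≤ p.length := (minDegreeSum_two_le hne hadj).trans
      (Nat.cast_le.2 (hp.degree_add_degree_le_length hG.preconnected hz))
    rw [Walk.length_support, Nat.cast_add, Nat.cast_one]
    exact (min_le_right _ _).trans (add_le_add_left hσ 1)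

/-- **Corollary 15.** If `G` is connected of order `n` and `σ_2 ≥ n - 2`, then
`G` has a dominating path. -/
theorem corollary15 [Fintype V] (G : SimpleGraph V) [DecidableRel G.Adj]
    (hG : G.Connected)
    (h : (Fintype.card V : ℕ∞) ≤ minDegreeSum G 2 + 2) :
    ∃ (u v : V) (p : G.Walk u v), p.IsPath ∧
      IsIndSet G {x : V | x ∉ p.support} := by
  obtain ⟨u, v, p, hp, hlen⟩ := corollary15_general G hG
  have hcard := le_add_of_min_le (d := 1) (by rwa [add_assoc, one_add_one_eq_two]) hlen
  exact ⟨u, v, p, hp, isIndSet_compl_support_of_card_le hp (by exact_mod_cast hcard)⟩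
end

section
/- Let G be a connected graph of order n with σ_3 ≥ n − 2k + 4 for some integer k ≥ 2. Then G has a dominating k-ended tree. (Corollary 18) -/
open SimpleGraph

variable {V : Type*}

/-!
Suppose that no tree with at most `k` end-vertices is dominating. A longest path is then not
dominating, so some edge `xy` outside it has `x` adjacent to it, and hanging `xy` on the path
gives a spider with three legs and at least two more vertices than any path. Let `u`, `v`, `w` be
the ends of a largest spider. Exchanging edges yields neither a path with at most one vertex less
than the spider nor a larger spider, so `u`, `v`, `w` are independent and all their neighbours lie
on the spider. Moreover, on the leg ending at `u`, the neighbours of `u`, those of `v` moved one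
step towards the centre and those of `w` moved two steps are all distinct and different from `u`.
Hence the degrees of `u`, `v`, `w` add up to at most the order of the spider minus one. A tree
that is not dominating grows by two vertices at the price of one more end-vertex, so the spider
has at most `n - 2 * (k - 2)` vertices and the degree sum is at most `n - 2 * k + 3`.
-/

/-- The set of end-vertices of a subgraph, whose cardinality is `endVertexCount`. -/
def endVertices {G : SimpleGraph V} (H : G.Subgraph) : Set V :=
  {v | v ∈ H.verts ∧ (H.neighborSet v).ncard = 1}

/-- The list `l` is the vertex sequence of a walk of `G` from `u` to `v`; paths are the walks whose
list has no duplicates. -/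
structure IsWalkList (G : SimpleGraph V) (u v : V) (l : List V) : Prop where
  isChain : l.IsChain G.Adj
  head?_eq : l.head? = some u
  getLast?_eq : l.getLast? = some v

/-- Some subtree of `G` has vertex set `S` and all its end-vertices in `L`. Acyclicity is required
of `H.spanningCoe` and not of `H.coe`, so that trees being enlarged live on a fixed vertex type. -/
def HasTreeOn (G : SimpleGraph V) (S L : Set V) : Prop :=
  ∃ H : G.Subgraph, H.Connected ∧ H.spanningCoe.IsAcyclic ∧ H.verts = S ∧ endVertices H ⊆ L

/-- A spider of `G` with centre `c` and three legs: `A`, `B` and `C` list the vertices of the legs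
outwards, without the centre, and `u`, `v` and `w` are their last vertices. An empty leg ends at
`c`. -/
structure IsSpider (G : SimpleGraph V) (c u v w : V) (A B C : List V) : Prop where
  nodup : (c :: (A ++ B ++ C)).Nodup
  left : IsWalkList G c u (c :: A)
  mid : IsWalkList G c v (c :: B)
  right : IsWalkList G c w (c :: C)

/-- A spider of maximum order among all spiders of `G` which has at least two more vertices than
every path of `G`. The order of a spider is one more than the total length of its legs. -/
structure IsOptimalSpider (G : SimpleGraph V) (c u v w : V) (A B C : List V) : Prop extends
    IsSpider G c u v w A B C where
  length_lt : ∀ {x y : V} {l : List V}, IsWalkList G x y l → l.Nodup →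
    l.length < A.length + B.length + C.length
  length_le : ∀ {c' u' v' w' : V} {A' B' C' : List V}, IsSpider G c' u' v' w' A' B' C' →
    A'.length + B'.length + C'.length ≤ A.length + B.length + C.length

theorem minDegreeSum_le [Fintype V] (G : SimpleGraph V) [DecidableRel G.Adj] {s : Finset V}
    (hs : IsIndSet G ↑s) : minDegreeSum G s.card ≤ (∑ v ∈ s, G.degree v : ℕ) := by
  push_cast
  exact iInf₂_le s ⟨rfl, hs⟩

theorem exists_adj_adj_of_not_isIndSet_compl {G : SimpleGraph V} (hG : G.Preconnected) {S : Set V}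
    (hS : S.Nonempty) (hind : ¬ IsIndSet G Sᶜ) :
    ∃ z ∈ S, ∃ x ∉ S, ∃ y ∉ S, G.Adj z x ∧ G.Adj x y := by
  obtain ⟨s, hs⟩ := hS
  simp only [IsIndSet, not_forall, not_not] at hind
  obtain ⟨p, hp, q, hq, hpq⟩ := hind
  obtain ⟨walk⟩ := hG p s
  clear hG
  induction walk generalizing q with
  | nil => exact absurd hs hp
  | @cons p p' s h _ ih =>
    by_cases hp' : p' ∈ S
    · exact ⟨p', hp', p, hp, q, hq, h.symm, hpq⟩
    · exact ih hs hp' p hp h.symm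

/-- The sets of positions where `p` holds, where `q` holds moved back by one, and where `r` holds
moved back by two are disjoint. -/
theorem countP_add_countP_add_countP_le {α : Type*} (p q r : α → Bool) (x y : α) (l : List α)
    (hpq : ∀ s t, [s, t] <:+: x :: y :: l → p s → ¬ q t)
    (hqr : ∀ s t, [s, t] <:+: x :: y :: l → q s → ¬ r t)
    (hpr : ∀ s b t, [s, b, t] <:+: x :: y :: l → p s → ¬ r t)
    (hlast : ∀ t, (y :: l).getLast? = some t → ¬ p t) :
    (x :: y :: l).countP p + (y :: l).countP q + l.countP r ≤ l.length + 1 := by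
  induction l generalizing x y with
  | nil =>
    have hxy := hpq x y List.infix_rfl
    have hy := hlast y rfl
    simp only [List.countP_cons, List.countP_nil, List.length_nil]
    grind
  | cons z l ih =>
    have htail : y :: z :: l <:+: x :: y :: z :: l := (List.suffix_cons _ _).isInfix
    have hle := ih y z (fun s t h => hpq s t (h.trans htail)) (fun s t h => hqr s t (h.trans htail))
      (fun s b t h => hpr s b t (h.trans htail)) (fun t ht => hlast t (by simpa using ht))
    have hxy := hpq x y ⟨[], z :: l, rfl⟩
    have hyz := hqr y z ⟨[x], l, rfl⟩
    have hxz := hpr x y z ⟨[], l, rfl⟩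
    simp only [List.countP_cons, List.length_cons] at hle ⊢
    grind

namespace IsWalkList

variable {G : SimpleGraph V} {c u v x y : V} {l l₁ l₂ A : List V}

theorem singleton (G : SimpleGraph V) (u : V) : IsWalkList G u u [u] :=
  ⟨.singleton u, rfl, rfl⟩

theorem reverse (h : IsWalkList G u v l) : IsWalkList G v u l.reverse where
  isChain := by
    simpa only [List.isChain_reverse, adj_comm] using h.isChain
  head?_eq := by rw [List.head?_reverse, h.getLast?_eq]
  getLast?_eq := by rw [List.getLast?_reverse, h.head?_eq]

theorem append (h₁ : IsWalkList G u x l₁) (h₂ : IsWalkList G y v l₂) (hxy : G.Adj x y) :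
    IsWalkList G u v (l₁ ++ l₂) where
  isChain := List.isChain_append.2 ⟨h₁.isChain, h₂.isChain, by
    simpa [h₁.getLast?_eq, h₂.head?_eq] using hxy⟩
  head?_eq := by simp [h₁.head?_eq]
  getLast?_eq := by simp [h₂.getLast?_eq]

theorem eq_cons (h : IsWalkList G u v l) : l = u :: l.tail :=
  (List.cons_head?_tail h.head?_eq).symm

theorem reverse_append (h₁ : IsWalkList G c u (c :: A)) (h₂ : IsWalkList G c v l) :
    IsWalkList G u v (A.reverse ++ l) where
  isChain := by
    rw [h₂.eq_cons, List.isChain_split, ← List.reverse_cons, ← h₂.eq_cons]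
    exact ⟨h₁.reverse.isChain, h₂.isChain⟩
  head?_eq := by
    rw [h₂.eq_cons, List.append_cons, ← List.reverse_cons, List.head?_append, h₁.reverse.head?_eq,
      Option.some_or]
  getLast?_eq := by simp [h₂.getLast?_eq]

theorem of_cons_cons (h : IsWalkList G u v (u :: x :: l)) :
    G.Adj u x ∧ IsWalkList G x v (x :: l) := by
  have hux := List.isChain_cons_cons.1 h.isChain
  exact ⟨hux.1, hux.2, rfl, by simpa using h.getLast?_eq⟩

theorem of_append_cons (h : IsWalkList G u v (l₁ ++ c :: l₂)) :
    IsWalkList G c u (c :: l₁.reverse) ∧ IsWalkList G c v (c :: l₂) := by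
  obtain ⟨hl₁, hl₂⟩ := List.isChain_split.1 h.isChain
  have hu : IsWalkList G u c (l₁ ++ [c]) := ⟨hl₁, by simpa using h.head?_eq, by simp⟩
  exact ⟨by simpa using hu.reverse, hl₂, rfl, by simpa using h.getLast?_eq⟩

theorem exists_split {s t : V} {Z : List V} (h : IsWalkList G c u (c :: A))
    (hst : s :: (Z ++ [t]) <:+: c :: A) :
    ∃ X Y, A = X ++ (Z ++ t :: Y) ∧ IsWalkList G c s (c :: X) ∧ IsWalkList G t u (t :: Y) := by
  obtain ⟨W, Y, hWY⟩ := hst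
  obtain ⟨X, hX⟩ : ∃ X, W ++ [s] = c :: X := by
    obtain _ | ⟨d, W⟩ := W <;> simp_all
  have hA : c :: A = (c :: X) ++ (Z ++ t :: Y) := by simp [← hX, ← hWY]
  refine ⟨X, Y, by simpa using hA, ⟨?_, rfl, by simp [← hX]⟩, ?_, rfl, ?_⟩
  · exact (hA ▸ h.isChain).left_of_append
  · exact (hA ▸ h.isChain).right_of_append.right_of_append
  · simpa [hA, List.getLast?_append, List.getLast?_cons, - List.cons_append] using h.getLast?_eq

end IsWalkList

section AttachVertex

variable {G : SimpleGraph V} {H : G.Subgraph} {x z : V}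

theorem isAcyclic_spanningCoe_sup_subgraphOfAdj (hH : H.spanningCoe.IsAcyclic) (hz : z ∈ H.verts)
    (hx : x ∉ H.verts) (hzx : G.Adj z x) : (H ⊔ G.subgraphOfAdj hzx).spanningCoe.IsAcyclic := by
  have hxz : ¬ H.spanningCoe.Reachable x z := by
    rintro ⟨_ | ⟨h, -⟩⟩
    · exact hx hz
    · exact hx h.fst_mem
  refine (hH.sup_edge_of_not_reachable hxz).anti fun a b hab => ?_
  have := hzx.ne
  simp only [Subgraph.spanningCoe_adj, Subgraph.sup_adj, subgraphOfAdj_adj, Sym2.eq_iff] at hab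
  simp only [sup_adj, Subgraph.spanningCoe_adj, edge_adj]
  grind

theorem endVertices_sup_subgraphOfAdj_subset (hz : ∃ y, H.Adj z y) (hx : x ∉ H.verts)
    (hzx : G.Adj z x) :
    endVertices (H ⊔ G.subgraphOfAdj hzx) ⊆ insert x (endVertices H \ {z}) := by
  rintro v ⟨hv, hdeg⟩
  have hadj : ∀ b, (H ⊔ G.subgraphOfAdj hzx).Adj v b ↔
      H.Adj v b ∨ (v = z ∧ b = x) ∨ (v = x ∧ b = z) := by
    intro b
    simp only [Subgraph.sup_adj, subgraphOfAdj_adj, Sym2.eq_iff]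
    grind
  obtain ⟨y, hy⟩ := hz
  have hvz : v ≠ z := by
    rintro rfl
    obtain ⟨a, ha⟩ := Set.ncard_eq_one.1 hdeg
    have hya : y = a := ha.subset ((hadj y).2 (.inl hy))
    have hxa : x = a := ha.subset ((hadj x).2 (.inr (.inl ⟨rfl, rfl⟩)))
    exact hx (hxa.trans hya.symm ▸ hy.snd_mem)
  by_cases hvx : v = x
  · exact .inl hvx
  · have hnbr : (H ⊔ G.subgraphOfAdj hzx).neighborSet v = H.neighborSet v := by
      ext b
      simp [Subgraph.mem_neighborSet, hvx, hvz]
    have hvH : v ∈ H.verts := by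
      simpa [hvx, hvz] using hv
    exact .inr ⟨⟨hvH, hnbr ▸ hdeg⟩, hvz⟩

end AttachVertex

namespace HasTreeOn

variable {G : SimpleGraph V} {S L : Set V} {u v x z : V} {l : List V}

theorem mono {L' : Set V} (hT : HasTreeOn G S L) (hL : L ⊆ L') : HasTreeOn G S L' := by
  obtain ⟨H, hconn, hacyc, hS, hends⟩ := hT
  exact ⟨H, hconn, hacyc, hS, hends.trans hL⟩

theorem singleton (G : SimpleGraph V) (a : V) : HasTreeOn G {a} {a} := by
  refine ⟨G.singletonSubgraph a, Subgraph.singletonSubgraph_connected, ?_, rfl, fun v hv => hv.1⟩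
  exact isAcyclic_bot.anti fun _ _ h => h

theorem pair {a b : V} (hab : G.Adj a b) : HasTreeOn G {a, b} {a, b} := by
  refine ⟨G.subgraphOfAdj hab, Subgraph.subgraphOfAdj_connected hab, ?_, rfl, fun v hv => hv.1⟩
  refine (isAcyclic_spanningCoe_sup_subgraphOfAdj (H := G.singletonSubgraph a) ?_ rfl
    hab.ne' hab).anti (Subgraph.spanningCoe_le_of_le le_sup_right)
  exact isAcyclic_bot.anti fun _ _ h => h

theorem insert_vertex (hT : HasTreeOn G S L) (hS : S.Nontrivial) (hz : z ∈ S) (hx : x ∉ S)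
    (hzx : G.Adj z x) : HasTreeOn G (insert x S) (insert x (L \ {z})) := by
  obtain ⟨H, hconn, hacyc, rfl, hends⟩ := hT
  have := hS.coe_sort
  refine ⟨H ⊔ G.subgraphOfAdj hzx, ?_, isAcyclic_spanningCoe_sup_subgraphOfAdj hacyc hz hx hzx, ?_,
    (endVertices_sup_subgraphOfAdj_subset ?_ hx hzx).trans ?_⟩
  · exact Subgraph.connected_sup hconn.preconnected
      (Subgraph.subgraphOfAdj_connected hzx).preconnected ⟨z, hz, by simp⟩
  · ext y
    simp only [Subgraph.verts_sup, subgraphOfAdj_verts]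
    grind
  · exact hconn.preconnected.exists_adj_of_nontrivial ⟨z, hz⟩
  · gcongr

theorem attach_path (hT : HasTreeOn G S L) (hS : S.Nontrivial) (hz : z ∈ S)
    (hl : IsWalkList G z u (z :: l)) (hnd : l.Nodup) (hdisj : ∀ y ∈ l, y ∉ S) :
    HasTreeOn G (S ∪ {y | y ∈ l}) (insert u (L \ {z})) := by
  induction l generalizing S L z with
  | nil =>
    obtain rfl : z = u := by simpa using hl.getLast?_eq
    simpa using hT.mono (by grind)
  | cons a l ih =>
    obtain ⟨hza, hal⟩ := hl.of_cons_cons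
    have hT' := hT.insert_vertex hS hz (hdisj a (by simp)) hza
    have := ih hT' (hS.mono (Set.subset_insert a S)) (Set.mem_insert a S) hal hnd.of_cons (by grind)
    convert this.mono (L' := insert u (L \ {z})) (by grind) using 1
    grind

theorem of_path (hl : IsWalkList G u v l) (hnd : l.Nodup) : HasTreeOn G {y | y ∈ l} {u, v} := by
  match l with
  | [] => simpa using hl.head?_eq
  | [x] =>
    obtain rfl : x = u := by simpa using hl.head?_eq
    simpa using (singleton G x).mono (by grind)
  | x :: y :: l =>
    obtain rfl : x = u := by simpa using hl.head?_eq
    obtain ⟨hxy, hyl⟩ := hl.of_cons_cons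
    have := (pair hxy).attach_path (Set.nontrivial_pair hxy.ne) (by simp) hyl (by grind) (by grind)
    convert this.mono (L' := {x, v}) (by grind) using 1
    grind

theorem exists_isTree [Finite V] (hT : HasTreeOn G S L) :
    ∃ H : G.Subgraph, H.coe.IsTree ∧ endVertexCount H ≤ L.ncard ∧ H.verts = S := by
  obtain ⟨H, hconn, hacyc, rfl, hends⟩ := hT
  exact ⟨H, ⟨hconn, hacyc.embedding H.coeEmbeddingSpanningCoe⟩, Set.ncard_le_ncard hends, rfl⟩

theorem exists_larger [Finite V] (hG : G.Preconnected) (hT : HasTreeOn G S L) (hS : S.Nontrivial)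
    (hind : ¬ IsIndSet G Sᶜ) :
    ∃ S' L', HasTreeOn G S' L' ∧ S'.Nontrivial ∧ L'.ncard ≤ L.ncard + 1 ∧
      S'.ncard = S.ncard + 2 := by
  obtain ⟨z, hz, x, hx, y, hy, hzx, hxy⟩ :=
    exists_adj_adj_of_not_isIndSet_compl hG hS.nonempty hind
  have hyx : y ∉ insert x S := by simp [hxy.ne', hy]
  have hSx : (insert x S).Nontrivial := hS.mono (Set.subset_insert x S)
  refine ⟨insert y (insert x S), insert y L, ?_, hSx.mono (Set.subset_insert y _),
    Set.ncard_insert_le y L, ?_⟩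
  · exact ((hT.insert_vertex hS hz hx hzx).insert_vertex hSx (Set.mem_insert x S) hyx hxy).mono
      (by grind)
  · rw [Set.ncard_insert_of_notMem hyx, Set.ncard_insert_of_notMem hx]

theorem ncard_add_two_mul_le_card [Finite V] (hG : G.Preconnected) {k : ℕ}
    (hdom : ∀ S L, HasTreeOn G S L → L.ncard ≤ k → ¬ IsIndSet G Sᶜ) (hT : HasTreeOn G S L)
    (hS : S.Nontrivial) (d : ℕ) (hd : L.ncard + d ≤ k + 1) : S.ncard + 2 * d ≤ Nat.card V := by
  induction d generalizing S L with
  | zero => exact Set.ncard_le_card S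
  | succ d ih =>
    obtain ⟨S', L', hT', hS', hL', hcard⟩ := hT.exists_larger hG hS (hdom S L hT (by lia))
    have := ih hT' hS' (by lia)
    lia

end HasTreeOn

namespace IsSpider

variable {G : SimpleGraph V} {c u v w : V} {A B C : List V}

theorem swap_left (hs : IsSpider G c u v w A B C) : IsSpider G c v u w B A C :=
  ⟨by have := hs.nodup; grind, hs.mid, hs.left, hs.right⟩

theorem swap_right (hs : IsSpider G c u v w A B C) : IsSpider G c u w v A C B :=
  ⟨by have := hs.nodup; grind, hs.left, hs.right, hs.mid⟩

theorem hasTreeOn (hs : IsSpider G c u v w A B C) (hA : A ≠ []) :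
    HasTreeOn G {y | y ∈ c :: (A ++ B ++ C)} {u, v, w} := by
  have hnd := hs.nodup
  have hT := HasTreeOn.of_path (hs.left.reverse_append hs.mid) (by grind)
  have hnontriv : {y | y ∈ A.reverse ++ c :: B}.Nontrivial := by
    obtain ⟨a, ha⟩ := List.exists_mem_of_ne_nil A hA
    exact ⟨a, by simp [ha], c, by simp, by grind⟩
  have := hT.attach_path hnontriv (by simp) hs.right (by grind) (by grind)
  convert this.mono (L' := {u, v, w}) (by grind) using 1
  grind

theorem ncard_verts (hs : IsSpider G c u v w A B C) :
    {y | y ∈ c :: (A ++ B ++ C)}.ncard = A.length + B.length + C.length + 1 := by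
  classical
  rw [← List.coe_toFinset, Set.ncard_coe_finset, List.toFinset_card_of_nodup hs.nodup]
  simp only [List.length_cons, List.length_append]

end IsSpider

namespace IsOptimalSpider

variable {G : SimpleGraph V} {c u v w : V} {A B C : List V}

theorem swap_left (hs : IsOptimalSpider G c u v w A B C) : IsOptimalSpider G c v u w B A C where
  toIsSpider := hs.toIsSpider.swap_left
  length_lt hl hnd := by have := hs.length_lt hl hnd; lia
  length_le hs' := by have := hs.length_le hs'; lia

theorem swap_right (hs : IsOptimalSpider G c u v w A B C) : IsOptimalSpider G c u w v A C B where
  toIsSpider := hs.toIsSpider.swap_right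
  length_lt hl hnd := by have := hs.length_lt hl hnd; lia
  length_le hs' := by have := hs.length_le hs'; lia

theorem length_lt_of_count_le [DecidableEq V] (hs : IsOptimalSpider G c u v w A B C) {x y : V}
    {l : List V} (hl : IsWalkList G x y l) (hle : ∀ a, l.count a ≤ (c :: (A ++ B ++ C)).count a) :
    l.length < A.length + B.length + C.length :=
  hs.length_lt hl <| List.nodup_iff_count_le_one.2 fun a =>
    (hle a).trans (List.nodup_iff_count_le_one.1 hs.nodup a)

theorem left_ne_nil (hs : IsOptimalSpider G c u v w A B C) : A ≠ [] := by
  rintro rfl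
  classical
  have := hs.length_lt_of_count_le (hs.mid.reverse_append hs.right) (by grind)
  grind

theorem exists_left_eq_cons (hs : IsOptimalSpider G c u v w A B C) :
    ∃ a L, A = a :: L ∧ IsWalkList G a u A := by
  obtain ⟨a, L, rfl⟩ := List.exists_cons_of_ne_nil hs.left_ne_nil
  exact ⟨a, L, rfl, hs.left.of_cons_cons.2⟩

theorem end_mem_left (hs : IsOptimalSpider G c u v w A B C) : u ∈ A := by
  obtain ⟨a, L, rfl, hau⟩ := hs.exists_left_eq_cons
  exact List.mem_of_getLast? hau.getLast?_eq

theorem end_left_ne_end_mid (hs : IsOptimalSpider G c u v w A B C) : u ≠ v := by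
  have hu := hs.end_mem_left
  have hv := hs.swap_left.end_mem_left
  have hnd := hs.nodup
  grind

theorem not_adj_ends (hs : IsOptimalSpider G c u v w A B C) : ¬ G.Adj u v := by
  intro huv
  obtain ⟨b, L, hB, hbv⟩ := hs.swap_left.exists_left_eq_cons
  classical
  have := hs.length_lt_of_count_le
    ((hs.right.reverse_append hs.left).append hbv.reverse huv) (by grind)
  grind

theorem not_adj_head (hs : IsOptimalSpider G c u v w A B C) {a : V} (ha : A.head? = some a) :
    ¬ G.Adj w a := by
  intro hwa
  obtain ⟨a', L, rfl, hau⟩ := hs.exists_left_eq_cons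
  obtain rfl : a' = a := by simpa using ha
  classical
  have := hs.length_lt_of_count_le ((hs.mid.reverse_append hs.right).append hau hwa) (by grind)
  grind

/-- Following `w … c … s u … t v … b`, with `s` and `t` on the first leg, loses only the vertices
strictly between `s` and `t`. -/
theorem not_adj_of_adj_left (hs : IsOptimalSpider G c u v w A B C) {s t : V} {Z : List V}
    (hZ : Z.length ≤ 1) (hst : s :: (Z ++ [t]) <:+: c :: A) (hus : G.Adj u s) : ¬ G.Adj v t := by
  intro hvt
  obtain ⟨X, Y, rfl, hcs, htu⟩ := hs.left.exists_split hst
  obtain ⟨b, L, rfl, hbv⟩ := hs.swap_left.exists_left_eq_cons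
  classical
  have := hs.length_lt_of_count_le
    (((hs.right.reverse_append hcs).append htu.reverse hus.symm).append hbv.reverse hvt.symm)
    (by grind)
  grind

/-- The path `b … v s … c … w t … u` covers the whole spider. -/
theorem not_adj_of_adj_mid (hs : IsOptimalSpider G c u v w A B C) {s t : V}
    (hst : [s, t] <:+: c :: A) (hvs : G.Adj v s) : ¬ G.Adj w t := by
  intro hwt
  obtain ⟨X, Y, rfl, hcs, htu⟩ := hs.left.exists_split (Z := []) hst
  obtain ⟨b, L, rfl, hbv⟩ := hs.swap_left.exists_left_eq_cons
  classical
  have := hs.length_lt_of_count_le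
    ((hbv.append (hcs.reverse_append hs.right) hvs).append htu hwt) (by grind)
  grind

theorem countP_leg_le [DecidableRel G.Adj] (hs : IsOptimalSpider G c u v w A B C) :
    (c :: A).countP (G.Adj u ·) + A.countP (G.Adj v ·) + A.countP (G.Adj w ·) ≤ A.length := by
  obtain ⟨a, L, rfl, hau⟩ := hs.exists_left_eq_cons
  have hwa : ¬ G.Adj w a := hs.not_adj_head rfl
  have := countP_add_countP_add_countP_le (G.Adj u ·) (G.Adj v ·) (G.Adj w ·) c a L
    (fun s t hst => by simpa using hs.not_adj_of_adj_left (Z := []) (by simp) hst)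
    (fun s t hst => by simpa using hs.not_adj_of_adj_mid hst)
    (fun s b t hst => by simpa using hs.swap_right.not_adj_of_adj_left (Z := [b]) (by simp) hst)
    (fun t ht => by
      obtain rfl : u = t := Option.some_injective _ (hau.getLast?_eq.symm.trans ht)
      simp)
  simpa [List.countP_cons_of_neg (p := (G.Adj w ·)) (l := L) (by simpa using hwa)] using this

theorem mem_of_adj (hs : IsOptimalSpider G c u v w A B C) {x : V} (hux : G.Adj u x) :
    x ∈ c :: (A ++ B ++ C) := by
  by_contra hx
  have hnd := hs.nodup
  have := hs.length_le (A' := A ++ [x]) ⟨by grind,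
    hs.left.append (.singleton G x) hux, hs.mid, hs.right⟩
  simp at this

theorem degree_le [Fintype V] [DecidableRel G.Adj] (hs : IsOptimalSpider G c u v w A B C) :
    G.degree u ≤ (c :: A).countP (G.Adj u ·) + B.countP (G.Adj u ·) + C.countP (G.Adj u ·) := by
  classical
  rw [← List.countP_append, ← List.countP_append, ← card_neighborFinset_eq_degree,
    List.countP_eq_length_filter]
  refine (Finset.card_le_card fun x hx => ?_).trans (List.toFinset_card_le _)
  rw [mem_neighborFinset] at hx
  simpa [hx] using hs.mem_of_adj hx

theorem exists_isIndSet_sum_degree_le [Fintype V] [DecidableRel G.Adj]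
    (hs : IsOptimalSpider G c u v w A B C) :
    ∃ s : Finset V, s.card = 3 ∧ IsIndSet G ↑s ∧
      ∑ v ∈ s, G.degree v ≤ A.length + B.length + C.length := by
  classical
  have huv := hs.end_left_ne_end_mid
  have huw := hs.swap_right.end_left_ne_end_mid
  have hvw := hs.swap_left.swap_right.end_left_ne_end_mid
  refine ⟨{u, v, w}, Finset.card_eq_three.2 ⟨u, v, w, huv, huw, hvw, rfl⟩, ?_, ?_⟩
  · have huv' := hs.not_adj_ends
    have huw' := hs.swap_right.not_adj_ends
    have hvw' := hs.swap_left.swap_right.not_adj_ends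
    simp [IsIndSet, huv', huw', hvw', adj_comm _ v u, adj_comm _ w u, adj_comm _ w v]
  · have hu := hs.degree_le
    have hv := hs.swap_left.degree_le
    have hw := hs.swap_right.swap_left.degree_le
    have hA := hs.countP_leg_le
    have hB := hs.swap_left.countP_leg_le
    have hC := hs.swap_right.swap_left.countP_leg_le
    rw [Finset.sum_insert (by simp [huv, huw]), Finset.sum_pair hvw]
    lia

end IsOptimalSpider

theorem exists_isSpider_of_not_isIndSet_compl {G : SimpleGraph V} (hG : G.Preconnected) {u v : V}
    {l : List V} (hl : IsWalkList G u v l) (hnd : l.Nodup) (hind : ¬ IsIndSet G {y | y ∈ l}ᶜ) :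
    ∃ c w A B C, IsSpider G c u v w A B C ∧ A.length + B.length + C.length = l.length + 1 := by
  obtain ⟨c, hc, x, hx, y, hy, hcx, hxy⟩ :=
    exists_adj_adj_of_not_isIndSet_compl hG ⟨u, List.mem_of_head? hl.head?_eq⟩ hind
  obtain ⟨A, B, rfl⟩ := List.append_of_mem hc
  have hne := hxy.ne
  refine ⟨c, y, A.reverse, B, [x, y], ⟨?_, hl.of_append_cons.1, hl.of_append_cons.2, ?_⟩, ?_⟩
  · simp only [List.nodup_append, List.nodup_cons, List.nodup_reverse, List.mem_append,
      List.mem_reverse, List.mem_cons, Set.mem_ofPred] at hnd hx hy ⊢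
    grind
  · exact (IsWalkList.singleton G c).append ((IsWalkList.singleton G x).append (.singleton G y) hxy)
      hcx
  · grind

theorem exists_isOptimalSpider [Finite V] {G : SimpleGraph V} (hG : G.Connected)
    (hdom : ∀ u v l, IsWalkList G u v l → l.Nodup → ¬ IsIndSet G {y | y ∈ l}ᶜ) :
    ∃ c u v w A B C, IsOptimalSpider G c u v w A B C := by
  have := Fintype.ofFinite V
  obtain ⟨_, ⟨x, y, l, hl, hnd, rfl⟩, hl_max⟩ := BddAbove.exists_isGreatest_of_nonempty
    (S := {n | ∃ x y l, IsWalkList G x y l ∧ l.Nodup ∧ l.length = n})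
    ⟨Fintype.card V, by rintro _ ⟨x, y, l, -, hnd, rfl⟩; exact hnd.length_le_card⟩
    (hG.nonempty.elim fun x => ⟨1, x, x, [x], .singleton G x, List.nodup_singleton x, rfl⟩)
  obtain ⟨c₀, w₀, A₀, B₀, C₀, hs₀, hlen₀⟩ :=
    exists_isSpider_of_not_isIndSet_compl hG.preconnected hl hnd (hdom x y l hl hnd)
  obtain ⟨_, ⟨c, u, v, w, A, B, C, hs, rfl⟩, hs_max⟩ := BddAbove.exists_isGreatest_of_nonempty
    (S := {n | ∃ c u v w A B C, IsSpider G c u v w A B C ∧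
      A.length + B.length + C.length = n})
    ⟨Fintype.card V, by
      rintro _ ⟨c, u, v, w, A, B, C, hs, rfl⟩
      simpa [add_assoc] using hs.nodup.of_cons.length_le_card⟩
    ⟨_, c₀, x, y, w₀, A₀, B₀, C₀, hs₀, rfl⟩
  refine ⟨c, u, v, w, A, B, C, hs, fun {x' y' l'} hl' hnd' => ?_,
    fun hs' => hs_max ⟨_, _, _, _, _, _, _, hs', rfl⟩⟩
  calc
    l'.length ≤ l.length := hl_max ⟨x', y', l', hl', hnd', rfl⟩
    _ < A₀.length + B₀.length + C₀.length := by lia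
    _ ≤ A.length + B.length + C.length := hs_max ⟨c₀, x, y, w₀, A₀, B₀, C₀, hs₀, rfl⟩

theorem exists_isIndSet_sum_degree_add_le [Fintype V] {G : SimpleGraph V} [DecidableRel G.Adj]
    (hG : G.Connected) {k : ℕ} (hk : 2 ≤ k)
    (hdom : ∀ S L, HasTreeOn G S L → L.ncard ≤ k → ¬ IsIndSet G Sᶜ) :
    ∃ s : Finset V, s.card = 3 ∧ IsIndSet G ↑s ∧
      ∑ v ∈ s, G.degree v + 2 * k ≤ Fintype.card V + 3 := by
  obtain ⟨c, u, v, w, A, B, C, hs⟩ := exists_isOptimalSpider hG fun u v l hl hnd =>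
    hdom _ _ (.of_path hl hnd) (((Set.ncard_insert_le u {v}).trans_eq (by simp)).trans hk)
  obtain ⟨s, hcard, hind, hsum⟩ := hs.exists_isIndSet_sum_degree_le
  have hends : ({u, v, w} : Set V).ncard ≤ 3 :=
    (Set.ncard_insert_le u {v, w}).trans
      (Nat.succ_le_succ ((Set.ncard_insert_le v {w}).trans_eq (by simp)))
  have hverts : {y | y ∈ c :: (A ++ B ++ C)}.Nontrivial := by
    rw [← Set.one_lt_ncard_iff_nontrivial, hs.ncard_verts]
    have := List.length_pos_iff.2 hs.left_ne_nil
    lia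
  have hgrow := HasTreeOn.ncard_add_two_mul_le_card hG.preconnected hdom
    (hs.hasTreeOn hs.left_ne_nil) hverts (k - 2) (by lia)
  rw [hs.ncard_verts, Nat.card_eq_fintype_card] at hgrow
  exact ⟨s, hcard, hind, by lia⟩

/-- **Corollary 18.** If `G` is connected of order `n` and `σ_3 ≥ n - 2k + 4` for
some integer `k ≥ 2`, then `G` has a dominating `k`-ended tree. -/
theorem corollary18 [Fintype V] (G : SimpleGraph V) [DecidableRel G.Adj]
    (hG : G.Connected) (k : ℕ) (hk : 2 ≤ k)
    (h : (Fintype.card V : ℕ∞) + 4 ≤ minDegreeSum G 3 + ((2 * k : ℕ) : ℕ∞)) :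
    ∃ H : G.Subgraph, IsKEndedTree G k H ∧ IsIndSet G H.vertsᶜ := by
  by_contra! hcon
  obtain ⟨s, hcard, hs, hsum⟩ := exists_isIndSet_sum_degree_add_le hG hk fun S L hT hL => by
    obtain ⟨H, hH, hends, rfl⟩ := hT.exists_isTree
    exact hcon H (.inl ⟨hH, hends.trans hL⟩)
  have hle := h.trans (add_le_add_left (hcard ▸ minDegreeSum_le G hs) _)
  norm_cast at hle
  lia
end
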